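/- arXiv:2309.03515 — 5 statements merged into one kernel-verified Lean document; each statement's English description precedes it below -/
import Mathlib

section
/- Let n ≥ 2, a ∈ 𝔹ⁿ \ {0}, t ∈ (0, |a|), and put x = t·a/|a|, y = −x. Then |σ_a(x) − σ_a(y)| = 2t(1 − |a|²)/(1 − |a|²t²), 1 − |σ_a(x)| = (1 − |a|)(1 + t)/(1 − t|a|), and 1 − |σ_a(y)| = (1 − |a|)(1 − t)/(1 + t|a|). -/
noncomputable section

open Real Filter

/-- The hyperbolic-type metric `h_{𝔹ⁿ,c}` on the unit ball. -/
def hB {n : ℕ} (c : ℝ) (x y : EuclideanSpace ℝ (Fin n)) : ℝ :=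
  Real.log (1 + c * ‖x - y‖ / Real.sqrt ((1 - ‖x‖) * (1 - ‖y‖)))

/-- The n-th (last) coordinate of a point of `ℝⁿ`. -/
def lastCoord {n : ℕ} (x : EuclideanSpace ℝ (Fin n)) : ℝ :=
  if h : 0 < n then x ⟨n - 1, Nat.sub_lt h one_pos⟩ else 0

/-- The hyperbolic-type metric `h_{ℍⁿ,c}` on the upper half space. -/
def hH {n : ℕ} (c : ℝ) (x y : EuclideanSpace ℝ (Fin n)) : ℝ :=
  Real.log (1 + c * ‖x - y‖ / Real.sqrt (lastCoord x * lastCoord y))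

/-- The hyperbolic-type metric `h_{𝔹ⁿ\{p},c}` on the punctured unit ball. -/
def hP {n : ℕ} (c : ℝ) (p x y : EuclideanSpace ℝ (Fin n)) : ℝ :=
  Real.log (1 + c * ‖x - y‖ /
    Real.sqrt (min ‖x - p‖ (1 - ‖x‖) * min ‖y - p‖ (1 - ‖y‖)))

/-- The inversion `σ_a` in the sphere `S^{n-1}(a*, r)`, `a* = a/|a|²`, `r² = 1/|a|² - 1`. -/
def sigmaInv {n : ℕ} (a x : EuclideanSpace ℝ (Fin n)) : EuclideanSpace ℝ (Fin n) :=
  (‖a‖ ^ 2)⁻¹ • a +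
    (((‖a‖ ^ 2)⁻¹ - 1) / ‖x - (‖a‖ ^ 2)⁻¹ • a‖ ^ 2) • (x - (‖a‖ ^ 2)⁻¹ • a)

/-- The last standard basis vector `eₙ` of `ℝⁿ`. -/
def eLast (n : ℕ) : EuclideanSpace ℝ (Fin n) :=
  if h : 0 < n then EuclideanSpace.single ⟨n - 1, Nat.sub_lt h one_pos⟩ 1 else 0

/-- The first standard basis vector `e₁` of `ℝⁿ`. -/
def eFirst (n : ℕ) : EuclideanSpace ℝ (Fin n) :=
  if h : 0 < n then EuclideanSpace.single ⟨0, h⟩ 1 else 0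

/-- The inversion `σ` in the sphere `S^{n-1}(-eₙ, √2)`, mapping `𝔹ⁿ` onto `ℍⁿ`. -/
def sigmaBH {n : ℕ} (x : EuclideanSpace ℝ (Fin n)) : EuclideanSpace ℝ (Fin n) :=
  -eLast n + (2 / ‖x + eLast n‖ ^ 2) • (x + eLast n)

theorem sigmaInv_line {n : ℕ} (a : EuclideanSpace ℝ (Fin n)) (haB : ‖a‖ < 1) (hA : 0 < ‖a‖)
    (s : ℝ) (hs : 0 < 1 - s * ‖a‖) :
    sigmaInv a ((s / ‖a‖) • a) = ((‖a‖ - s) / (1 - s * ‖a‖) / ‖a‖) • a := by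
  have e : (s / ‖a‖) • a - (‖a‖ ^ 2)⁻¹ • a = (s / ‖a‖ - (‖a‖ ^ 2)⁻¹) • a := by
    rw [sub_smul]
  unfold sigmaInv
  rw [e, norm_smul, mul_pow, Real.norm_eq_abs, sq_abs, smul_smul, ← add_smul]
  congr 1
  generalize ‖a‖ = A at *
  have h2 : s / A - (A ^ 2)⁻¹ = -(1 - s * A) / A ^ 2 := by
    field_simp
    ring
  rw [h2]
  have h3 := hs.ne'
  generalize hd : 1 - s * A = d at *
  field_simp
  rw [← hd]
  ring

theorem sigma_a_symmetric_points (n : ℕ) (hn : 2 ≤ n)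
    (a : EuclideanSpace ℝ (Fin n)) (haB : ‖a‖ < 1) (ha0 : a ≠ 0)
    (t : ℝ) (ht0 : 0 < t) (hta : t < ‖a‖)
    (x y : EuclideanSpace ℝ (Fin n))
    (hx : x = (t / ‖a‖) • a) (hy : y = -x) :
    ‖sigmaInv a x - sigmaInv a y‖ = 2 * t * (1 - ‖a‖ ^ 2) / (1 - ‖a‖ ^ 2 * t ^ 2) ∧
      1 - ‖sigmaInv a x‖ = (1 - ‖a‖) * (1 + t) / (1 - t * ‖a‖) ∧
      1 - ‖sigmaInv a y‖ = (1 - ‖a‖) * (1 - t) / (1 + t * ‖a‖) := by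
  have hA : 0 < ‖a‖ := norm_pos_iff.mpr ha0
  have h1 : 0 < 1 - t * ‖a‖ := by nlinarith
  have h2 : 0 < 1 - (-t) * ‖a‖ := by nlinarith
  have h2' : 0 < 1 + t * ‖a‖ := by nlinarith
  have ex : sigmaInv a x = _ := hx ▸ sigmaInv_line a haB hA t h1
  have hy' : y = ((-t) / ‖a‖) • a := by rw [hy, hx, neg_div, neg_smul]
  have ey : sigmaInv a y = _ := hy' ▸ sigmaInv_line a haB hA (-t) h2
  rw [neg_mul, sub_neg_eq_add, sub_neg_eq_add] at ey
  have nx : ‖sigmaInv a x‖ = (‖a‖ - t) / (1 - t * ‖a‖) := by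
    rw [ex, norm_smul, Real.norm_eq_abs, abs_of_nonneg, div_mul_cancel₀ _ hA.ne']
    exact div_nonneg (div_nonneg (by linarith) h1.le) hA.le
  have ny : ‖sigmaInv a y‖ = (‖a‖ + t) / (1 + t * ‖a‖) := by
    rw [ey, norm_smul, Real.norm_eq_abs, abs_of_nonneg, div_mul_cancel₀ _ hA.ne']
    positivity
  have h12 : 1 - ‖a‖ ^ 2 * t ^ 2 = (1 - t * ‖a‖) * (1 + t * ‖a‖) := by ring
  refine ⟨?_, ?_, ?_⟩
  · have hp : 0 < 1 - ‖a‖ ^ 2 := by nlinarith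
    have key : (‖a‖ - t) / (1 - t * ‖a‖) / ‖a‖ - (‖a‖ + t) / (1 + t * ‖a‖) / ‖a‖
        = -(2 * t * (1 - ‖a‖ ^ 2) / ((1 - t * ‖a‖) * (1 + t * ‖a‖)) / ‖a‖) := by
      rw [← sub_div, ← neg_div, div_sub_div _ _ h1.ne' h2'.ne', ← neg_div]
      congr 2
      ring
    rw [ex, ey, ← sub_smul, norm_smul, key, norm_neg, Real.norm_eq_abs, abs_of_nonneg,
      div_mul_cancel₀ _ hA.ne', h12]
    positivity
  · rw [nx, eq_div_iff h1.ne', sub_mul, div_mul_cancel₀ _ h1.ne']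
    ring
  · rw [ny, eq_div_iff h2'.ne', sub_mul, div_mul_cancel₀ _ h2'.ne']
    ring
end
end

section
/- Let n ≥ 2 and let σ(x) = −eₙ + 2(x + eₙ)/|x + eₙ|² be the inversion in the sphere S^{n−1}(−eₙ, √2), which maps 𝔹ⁿ onto ℍⁿ. Then for all x, y ∈ 𝔹ⁿ and all c > 0: h_{𝔹ⁿ,c}(x, y) ≤ h_{ℍⁿ,c}(σ(x), σ(y)) ≤ 2·h_{𝔹ⁿ,c}(x, y). -/
noncomputable section

open Real Filter

theorem aux_pos {n : ℕ} (hn : 2 ≤ n) (x : EuclideanSpace ℝ (Fin n)) (hx : ‖x‖ < 1) :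
    0 < ‖x + eLast n‖ ∧ lastCoord (sigmaBH x) = (1 - ‖x‖ ^ 2) / ‖x + eLast n‖ ^ 2 := by
  have h0 : 0 < n := by omega
  have he : ‖eLast n‖ = 1 := by simp [eLast, h0]
  have hpos : 0 < ‖x + eLast n‖ := by
    have h := norm_sub_le (x + eLast n) x
    rw [add_sub_cancel_left, he] at h
    linarith
  refine ⟨hpos, ?_⟩
  have hl : lastCoord (sigmaBH x) = -1 + 2 / ‖x + eLast n‖ ^ 2 * (lastCoord x + 1) := by
    simp [lastCoord, sigmaBH, eLast, h0]
    ring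
  have hsq : ‖x + eLast n‖ ^ 2 = ‖x‖ ^ 2 + 2 * lastCoord x + 1 := by
    rw [norm_add_sq_real, he]
    have : inner ℝ x (eLast n) = lastCoord x := by
      simp [lastCoord, eLast, h0, EuclideanSpace.inner_single_right]
    rw [this]; ring
  rw [hl]
  field_simp
  rw [hsq]; ring

theorem aux_dist {n : ℕ} (x y : EuclideanSpace ℝ (Fin n)) (hx : 0 < ‖x + eLast n‖)
    (hy : 0 < ‖y + eLast n‖) :
    ‖sigmaBH x - sigmaBH y‖ = 2 / (‖x + eLast n‖ * ‖y + eLast n‖) * ‖x - y‖ := by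
  have h := dist_div_norm_sq_smul (norm_pos_iff.1 hx) (norm_pos_iff.1 hy) (√2)
  simp only [div_pow, Real.sq_sqrt (zero_le_two : (0:ℝ) ≤ 2), dist_eq_norm] at h
  rw [add_sub_add_right_eq_sub] at h
  rw [← h, sigmaBH, sigmaBH, add_sub_add_left_eq_sub]

theorem ball_to_halfspace_lipschitz (n : ℕ) (hn : 2 ≤ n)
    (x y : EuclideanSpace ℝ (Fin n)) (hx : ‖x‖ < 1) (hy : ‖y‖ < 1)
    (c : ℝ) (hc : 0 < c) :
    hB c x y ≤ hH c (sigmaBH x) (sigmaBH y) ∧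
      hH c (sigmaBH x) (sigmaBH y) ≤ 2 * hB c x y := by
  obtain ⟨hpx, hlx⟩ := aux_pos hn x hx
  obtain ⟨hpy, hly⟩ := aux_pos hn y hy
  have hd := aux_dist x y hpx hpy
  have nx := norm_nonneg x
  have ny := norm_nonneg y
  have nd := norm_nonneg (x - y)
  have hA : 0 < (1 - ‖x‖) * (1 - ‖y‖) := mul_pos (by linarith) (by linarith)
  have hK : 1 ≤ (1 + ‖x‖) * (1 + ‖y‖) := by nlinarith
  have hK4 : (1 + ‖x‖) * (1 + ‖y‖) ≤ 2 ^ 2 := by nlinarith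
  have hs : √(lastCoord (sigmaBH x) * lastCoord (sigmaBH y))
      = √((1 - ‖x‖) * (1 - ‖y‖)) * √((1 + ‖x‖) * (1 + ‖y‖))
        / (‖x + eLast n‖ * ‖y + eLast n‖) := by
    rw [hlx, hly, ← Real.sqrt_mul hA.le, div_mul_div_comm, ← mul_pow,
      Real.sqrt_div' _ (by positivity), Real.sqrt_sq (by positivity)]
    congr 2; ring
  have sA := Real.sqrt_pos.2 hA
  have sK : 1 ≤ √((1 + ‖x‖) * (1 + ‖y‖)) := Real.one_le_sqrt.2 hK
  have sK2 : √((1 + ‖x‖) * (1 + ‖y‖)) ≤ 2 := (Real.sqrt_le_left (by norm_num)).2 hK4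
  unfold hB hH
  rw [hs, hd]
  set A := √((1 - ‖x‖) * (1 - ‖y‖))
  set K := √((1 + ‖x‖) * (1 + ‖y‖))
  have hK0 : 0 < K := by linarith
  have hq : c * (2 / (‖x + eLast n‖ * ‖y + eLast n‖) * ‖x - y‖)
      / (A * K / (‖x + eLast n‖ * ‖y + eLast n‖)) = (c * ‖x - y‖ / A) * (2 / K) := by
    field_simp
  rw [hq]
  have ht : 0 ≤ c * ‖x - y‖ / A := by positivity
  set t := c * ‖x - y‖ / A
  have k1 : 1 ≤ 2 / K := (one_le_div hK0).2 sK2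
  have k2 : 2 / K ≤ 2 := (div_le_iff₀ hK0).2 (by linarith)
  constructor
  · apply Real.log_le_log (by linarith)
    nlinarith
  · rw [show (2:ℝ) * Real.log (1 + t) = Real.log ((1 + t) ^ 2) by rw [Real.log_pow]; norm_num]
    apply Real.log_le_log (by nlinarith)
    nlinarith
end
end

section
/- Let n ≥ 2, c > 0, and let σ(x) = −eₙ + 2(x + eₙ)/|x + eₙ|² be the inversion in the sphere S^{n−1}(−eₙ, √2). For t ∈ (0,1) put x_t = t·e₁ and y_t = −t·e₁. Then lim_{t→1⁻} h_{ℍⁿ,c}(σ(x_t), σ(y_t)) / h_{𝔹ⁿ,c}(x_t, y_t) = 1. Consequently, the constant 1 in the bound h_{𝔹ⁿ,c}(x, y) ≤ h_{ℍⁿ,c}(σ(x), σ(y)) is best possible. -/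
noncomputable section

open Real Filter

theorem eFirst_last_norm (n : ℕ) (hn : 2 ≤ n) (s : ℝ) :
    ‖s • eFirst n + eLast n‖ ^ 2 = 1 + s ^ 2 := by
  have h0 : 0 < n := by omega
  have hne : (⟨0, h0⟩ : Fin n) ≠ ⟨n - 1, Nat.sub_lt h0 one_pos⟩ := by
    intro h
    have := congrArg Fin.val h
    simp at this
    omega
  rw [norm_add_sq_real]
  simp [eFirst, eLast, h0, norm_smul, inner_smul_left, hne, hne.symm,
    EuclideanSpace.inner_single_left]
  ring

theorem norm_eFirst' (n : ℕ) (hn : 2 ≤ n) : ‖eFirst n‖ = 1 := by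
  have h0 : 0 < n := by omega
  simp [eFirst, h0]

theorem sigma_lastCoord (n : ℕ) (hn : 2 ≤ n) (s : ℝ) :
    lastCoord (sigmaBH (s • eFirst n)) = (1 - s ^ 2) / (1 + s ^ 2) := by
  have h0 : 0 < n := by omega
  have hne : (⟨n - 1, Nat.sub_lt h0 one_pos⟩ : Fin n) ≠ ⟨0, h0⟩ := by
    intro h
    have := congrArg Fin.val h
    simp at this
    omega
  have hp : 1 + s ^ 2 ≠ 0 := by positivity
  rw [sigmaBH, eFirst_last_norm n hn]
  simp [lastCoord, eFirst, eLast, h0, hne]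
  field_simp
  ring

theorem sigma_dist (n : ℕ) (hn : 2 ≤ n) (t : ℝ) (ht : 0 < t) :
    ‖sigmaBH (t • eFirst n) - sigmaBH ((-t) • eFirst n)‖ = 4 * t / (1 + t ^ 2) := by
  have hp : 0 < 1 + t ^ 2 := by positivity
  rw [sigmaBH, sigmaBH, eFirst_last_norm n hn, eFirst_last_norm n hn, neg_sq]
  have : -eLast n + (2 / (1 + t ^ 2)) • (t • eFirst n + eLast n) -
      (-eLast n + (2 / (1 + t ^ 2)) • ((-t) • eFirst n + eLast n)) =
      (4 * t / (1 + t ^ 2)) • eFirst n := by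
    module
  rw [this, norm_smul, norm_eFirst' n hn, mul_one, Real.norm_of_nonneg (by positivity)]

theorem hH_val (n : ℕ) (hn : 2 ≤ n) (c t : ℝ) (ht : 0 < t) (ht1 : t < 1) :
    hH c (sigmaBH (t • eFirst n)) (sigmaBH (-(t • eFirst n))) =
      Real.log (1 + c * (4 * t / (1 - t ^ 2))) := by
  have h1 : 0 < 1 - t ^ 2 := by nlinarith
  have hp : 0 < 1 + t ^ 2 := by positivity
  rw [← neg_smul, hH, sigma_dist n hn t ht, sigma_lastCoord n hn, sigma_lastCoord n hn, neg_sq,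
    Real.sqrt_mul_self (by positivity)]
  congr 2
  field_simp

theorem hB_val (n : ℕ) (hn : 2 ≤ n) (c t : ℝ) (ht : 0 < t) (ht1 : t < 1) :
    hB c (t • eFirst n) (-(t • eFirst n)) = Real.log (1 + c * (2 * t / (1 - t))) := by
  have h1 : 0 < 1 - t := by linarith
  have h2 : t • eFirst n - -(t • eFirst n) = (2 * t) • eFirst n := by module
  rw [hB, h2, norm_neg, norm_smul, norm_smul, norm_eFirst' n hn, Real.norm_of_nonneg ht.le,
    Real.norm_of_nonneg (by positivity), mul_one, mul_one, Real.sqrt_mul_self h1.le, mul_div_assoc]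

theorem ball_to_halfspace_constant_one_sharp (n : ℕ) (hn : 2 ≤ n)
    (c : ℝ) (hc : 0 < c) :
    Filter.Tendsto
      (fun t : ℝ =>
        hH c (sigmaBH (t • eFirst n)) (sigmaBH (-(t • eFirst n))) /
          hB c (t • eFirst n) (-(t • eFirst n)))
      (nhdsWithin 1 (Set.Ioo (0 : ℝ) 1)) (nhds 1) := by
  have hl : 0 < Real.log (1 + 2 * c) := Real.log_pos (by linarith)
  have hlim : Tendsto (fun t : ℝ => 1 + Real.log (2 / (1 + t)) / Real.log (1 + 2 * c))
      (nhdsWithin 1 (Set.Ioo (0 : ℝ) 1)) (nhds 1) := by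
    have : ContinuousAt (fun t : ℝ => 1 + Real.log (2 / (1 + t)) / Real.log (1 + 2 * c)) 1 := by
      refine continuousAt_const.add (ContinuousAt.div_const (ContinuousAt.log ?_ ?_) _)
      · exact continuousAt_const.div (by fun_prop) (by norm_num)
      · norm_num
    have h := this.tendsto
    norm_num at h
    exact h.mono_left nhdsWithin_le_nhds
  have hev : ∀ᶠ t : ℝ in nhdsWithin 1 (Set.Ioo (0 : ℝ) 1), 1 / 2 < t ∧ 0 < t ∧ t < 1 := by
    filter_upwards [self_mem_nhdsWithin,
      nhdsWithin_le_nhds (lt_mem_nhds (show (1 / 2 : ℝ) < 1 by norm_num))] with t h1 h2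
    exact ⟨h2, h1.1, h1.2⟩
  have key : ∀ t : ℝ, 1 / 2 < t → 0 < t → t < 1 →
      Real.log (1 + 2 * c) ≤ Real.log (1 + c * (2 * t / (1 - t))) ∧
      Real.log (1 + c * (2 * t / (1 - t))) ≤ Real.log (1 + c * (4 * t / (1 - t ^ 2))) ∧
      Real.log (1 + c * (4 * t / (1 - t ^ 2))) ≤
        Real.log (2 / (1 + t)) + Real.log (1 + c * (2 * t / (1 - t))) := by
    intro t h2 h0 h1
    have hm : 0 < 1 - t := by linarith
    have hB2 : 2 ≤ 2 * t / (1 - t) := by rw [le_div_iff₀ hm]; linarith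
    have hk : 1 ≤ 2 / (1 + t) := by rw [le_div_iff₀ (by linarith)]; linarith
    have hA : 4 * t / (1 - t ^ 2) = 2 / (1 + t) * (2 * t / (1 - t)) := by
      have : 1 - t ^ 2 ≠ 0 := by nlinarith
      have : 1 + t ≠ 0 := by linarith
      have : 1 - t ≠ 0 := hm.ne'
      rw [div_mul_div_comm]
      congr 1 <;> ring
    rw [hA]
    generalize 2 * t / (1 - t) = B at *
    generalize 2 / (1 + t) = k at *
    have hBc : 0 < c * B := by positivity
    refine ⟨Real.log_le_log (by linarith) (by nlinarith),
      Real.log_le_log (by linarith) (by nlinarith), ?_⟩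
    rw [← Real.log_mul (by linarith) (by linarith)]
    exact Real.log_le_log (by nlinarith) (by nlinarith)
  refine tendsto_of_tendsto_of_tendsto_of_le_of_le' tendsto_const_nhds hlim ?_ ?_
  · filter_upwards [hev] with t ⟨h2, h0, h1⟩
    obtain ⟨k1, k2, k3⟩ := key t h2 h0 h1
    rw [hH_val n hn c t h0 h1, hB_val n hn c t h0 h1, le_div_iff₀ (by linarith)]
    linarith
  · filter_upwards [hev] with t ⟨h2, h0, h1⟩
    obtain ⟨k1, k2, k3⟩ := key t h2 h0 h1
    rw [hH_val n hn c t h0 h1, hB_val n hn c t h0 h1, div_le_iff₀ (by linarith), add_mul, one_mul]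
    have hk : 0 ≤ Real.log (2 / (1 + t)) :=
      Real.log_nonneg (by rw [le_div_iff₀ (by linarith)]; linarith)
    have : Real.log (2 / (1 + t)) ≤ Real.log (2 / (1 + t)) / Real.log (1 + 2 * c) *
        Real.log (1 + c * (2 * t / (1 - t))) := by
      rw [div_mul_eq_mul_div, le_div_iff₀ hl]
      exact mul_le_mul_of_nonneg_left k1 hk
    linarith
end
end

section
/- Let n ≥ 2, a ∈ 𝔹ⁿ \ {0}, c > 0, and let σ_a be the inversion in the sphere S^{n−1}(a*, r) (so σ_a maps 𝔹ⁿ onto 𝔹ⁿ with σ_a(0) = a and σ_a(a) = 0). Then for all x, y ∈ 𝔹ⁿ \ {0}: h_{𝔹ⁿ\{a},c}(σ_a(x), σ_a(y)) ≤ (1 + |a|)·h_{𝔹ⁿ\{0},c}(x, y). -/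
noncomputable section

open Real Filter

theorem le_of_sq_le_sq_aux {x y : ℝ} (h : x ^ 2 ≤ y ^ 2) (hy : 0 ≤ y) : x ≤ y :=
  abs_le_of_sq_le_sq' h hy |>.2

theorem sig_dist {n : ℕ} (a : EuclideanSpace ℝ (Fin n)) (haB : ‖a‖ < 1) (ha0 : a ≠ 0)
    (x y : EuclideanSpace ℝ (Fin n)) (hx : x ≠ (‖a‖ ^ 2)⁻¹ • a) (hy : y ≠ (‖a‖ ^ 2)⁻¹ • a) :
    ‖sigmaInv a x - sigmaInv a y‖ = ((‖a‖ ^ 2)⁻¹ - 1) /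
      (‖x - (‖a‖ ^ 2)⁻¹ • a‖ * ‖y - (‖a‖ ^ 2)⁻¹ • a‖) * ‖x - y‖ := by
  have hs : 0 < ‖a‖ := norm_pos_iff.2 ha0
  have hr : 0 ≤ (‖a‖ ^ 2)⁻¹ - 1 := by
    have : 1 ≤ (‖a‖ ^ 2)⁻¹ := (one_le_inv₀ (by positivity)).2 (by nlinarith)
    linarith
  have key : ∀ z, sigmaInv a z =
      EuclideanGeometry.inversion ((‖a‖ ^ 2)⁻¹ • a) (√((‖a‖ ^ 2)⁻¹ - 1)) z := by
    intro z
    unfold sigmaInv EuclideanGeometry.inversion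
    rw [div_pow, Real.sq_sqrt hr, dist_eq_norm, vsub_eq_sub, vadd_eq_add, add_comm]
  have := EuclideanGeometry.dist_inversion_inversion hx hy (√((‖a‖ ^ 2)⁻¹ - 1))
  rw [← key, ← key, Real.sq_sqrt hr] at this
  simpa [dist_eq_norm] using this

theorem sig_point {n : ℕ} (a : EuclideanSpace ℝ (Fin n)) (haB : ‖a‖ < 1) (ha0 : a ≠ 0)
    (x : EuclideanSpace ℝ (Fin n)) (hx : ‖x‖ < 1) (hx0 : x ≠ 0) :
    0 < ‖x - (‖a‖ ^ 2)⁻¹ • a‖ ∧ 0 < min ‖sigmaInv a x - a‖ (1 - ‖sigmaInv a x‖) ∧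
    ((‖a‖ ^ 2)⁻¹ - 1) * min ‖x - 0‖ (1 - ‖x‖) ≤
     (1 + ‖a‖) * (‖x - (‖a‖ ^ 2)⁻¹ • a‖ ^ 2 * min ‖sigmaInv a x - a‖ (1 - ‖sigmaInv a x‖)) := by
  have hs : 0 < ‖a‖ := norm_pos_iff.2 ha0
  have ht : 0 < ‖x‖ := norm_pos_iff.2 hx0
  have hA : ‖(‖a‖ ^ 2)⁻¹ • a‖ = ‖a‖⁻¹ := by
    rw [norm_smul, norm_inv, norm_pow, norm_norm]; field_simp
  have hA1 : 1 < ‖a‖⁻¹ := (one_lt_inv₀ hs).2 haB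
  have ne : ∀ z : EuclideanSpace ℝ (Fin n), ‖z‖ < 1 → z ≠ (‖a‖ ^ 2)⁻¹ • a := by
    intro z hz h
    rw [h, hA] at hz; linarith
  have haA : ‖a - (‖a‖ ^ 2)⁻¹ • a‖ = (1 - ‖a‖ ^ 2) / ‖a‖ := by
    have : a - (‖a‖ ^ 2)⁻¹ • a = (1 - (‖a‖ ^ 2)⁻¹) • a := by rw [sub_smul, one_smul]
    have h1 : 1 ≤ (‖a‖ ^ 2)⁻¹ := (one_le_inv₀ (by positivity)).2 (by nlinarith)
    rw [this, norm_smul, Real.norm_eq_abs, abs_of_nonpos (by linarith)]; field_simp; ring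
  have hq : 0 < 1 - ‖a‖ ^ 2 := by nlinarith
  have s0 : sigmaInv a 0 = a := by
    unfold sigmaInv
    rw [zero_sub, norm_neg, hA, smul_neg, smul_smul, ← sub_eq_add_neg, ← sub_smul]
    convert one_smul ℝ a using 2
    field_simp; ring
  have sa : sigmaInv a a = 0 := by
    unfold sigmaInv
    rw [haA]
    have : a - (‖a‖ ^ 2)⁻¹ • a = (1 - (‖a‖ ^ 2)⁻¹) • a := by rw [sub_smul, one_smul]
    rw [this, smul_smul, ← add_smul]
    convert zero_smul ℝ a using 2
    field_simp; ring
  have d0 := sig_dist a haB ha0 x 0 (ne x hx) (ne 0 (by simp))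
  have da := sig_dist a haB ha0 x a (ne x hx) (ne a haB)
  rw [s0, zero_sub, norm_neg, hA, sub_zero] at d0
  rw [sa, haA, sub_zero] at da
  have hX : 0 < ‖x - (‖a‖ ^ 2)⁻¹ • a‖ := norm_pos_iff.2 (sub_ne_zero.2 (ne x hx))
  have hX2 : ‖a‖ ^ 2 * ‖x - (‖a‖ ^ 2)⁻¹ • a‖ ^ 2 = 1 - 2 * inner ℝ x a + ‖a‖ ^ 2 * ‖x‖ ^ 2 := by
    rw [norm_sub_sq_real, hA, inner_smul_right]; field_simp; ring
  have hxa : ‖x - a‖ ^ 2 = ‖x‖ ^ 2 - 2 * inner ℝ x a + ‖a‖ ^ 2 := norm_sub_sq_real x a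
  have hu := abs_le.1 (abs_real_inner_le_norm x a)
  have hsub : ‖x - 0‖ = ‖x‖ := by simp
  rw [hsub]
  generalize ‖x - (‖a‖ ^ 2)⁻¹ • a‖ = X at *
  generalize ‖sigmaInv a x - a‖ = p at *
  generalize ‖sigmaInv a x‖ = w at *
  have hp : ‖a‖ * X * p = (1 - ‖a‖ ^ 2) * ‖x‖ := by rw [d0]; field_simp
  have hw : ‖a‖ * X * w = ‖x - a‖ := by rw [da]; field_simp
  have hv0 : 0 ≤ ‖x - a‖ := norm_nonneg _
  generalize ‖x - a‖ = v at *
  generalize inner ℝ x a = u at *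
  generalize ‖x‖ = t at *
  generalize ‖a‖ = s at *
  clear d0 da s0 sa hsub haA ne hA hA1
  obtain ⟨hu1, hu2⟩ := hu
  obtain ⟨D, hD⟩ : ∃ D, D = s * X := ⟨_, rfl⟩
  have hDp : 0 < D := by rw [hD]; positivity
  have hD2 : D ^ 2 = 1 - 2 * u + s ^ 2 * t ^ 2 := by rw [hD, mul_pow, hX2]
  rw [← hD] at hp hw
  have hst : 0 < s * t := by positivity
  have hst1 : s * t < 1 := by nlinarith
  have hD1 : 1 - s * t ≤ D := by
    apply le_of_sq_le_sq_aux ?_ hDp.le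
    nlinarith
  have hw2 : D ^ 2 * (1 - w ^ 2) = (1 - s ^ 2) * (1 - t ^ 2) := by
    have : D ^ 2 * w ^ 2 = v ^ 2 := by rw [← hw]; ring
    nlinarith
  have ht2 : 0 < 1 - t ^ 2 := by nlinarith
  have hw0 : 0 ≤ w := by
    have : w = v / D := by rw [← hw]; field_simp
    rw [this]; positivity
  have hw1 : w < 1 := by
    have : 0 < 1 - w ^ 2 := by
      have h : 0 < D ^ 2 * (1 - w ^ 2) := by rw [hw2]; positivity
      exact (pos_iff_pos_of_mul_pos h).1 (by positivity)
    nlinarith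
  have hpp : 0 < p := by
    have h : 0 < D * p := by rw [hp]; positivity
    exact (pos_iff_pos_of_mul_pos h).1 hDp
  have hwb : w * (1 + s * t) ≤ s + t := by
    have h1 : v * (1 + s * t) ≤ (s + t) * D := by
      apply le_of_sq_le_sq_aux ?_ (by positivity)
      rw [mul_pow, mul_pow, hxa, hD2]
      have : 0 ≤ (u + t * s) * ((1 - s ^ 2) * (1 - t ^ 2)) :=
        mul_nonneg (by linarith) (by positivity)
      nlinarith
    rw [← hw] at h1
    have : D * (w * (1 + s * t)) ≤ D * (s + t) := by linarith
    exact le_of_mul_le_mul_left this hDp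
  refine ⟨hX, lt_min hpp (by linarith), ?_⟩
  suffices h : (1 - s) * min t (1 - t) ≤ D ^ 2 * min p (1 - w) by
    have e : ((s ^ 2)⁻¹ - 1) * min t (1 - t) = (1 + s) / s ^ 2 * ((1 - s) * min t (1 - t)) := by
      field_simp; ring
    have e2 : (1 + s) * (X ^ 2 * min p (1 - w)) = (1 + s) / s ^ 2 * (D ^ 2 * min p (1 - w)) := by
      rw [hD]; field_simp
    rw [e, e2]
    gcongr
  rw [mul_min_of_nonneg _ _ (by positivity : 0 ≤ D ^ 2)]
  apply le_min
  · have e : D ^ 2 * p = (1 - s) * (D * ((1 + s) * t)) := by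
      rw [show D ^ 2 * p = D * (D * p) by ring, hp]; ring
    rw [e]
    apply mul_le_mul_of_nonneg_left _ (by linarith)
    have : (1 - s * t) * ((1 + s) * t) ≤ D * ((1 + s) * t) := by gcongr
    refine le_trans ?_ this
    rcases le_total t (1 / 2) with h | h
    · refine (min_le_left _ _).trans ?_
      have : 0 ≤ s * t * (1 - t - s * t) := mul_nonneg hst.le (by nlinarith)
      nlinarith
    · refine (min_le_right _ _).trans ?_
      have h1 : 0 ≤ (1 - s) * (2 * t - 1) := mul_nonneg (by linarith) (by linarith)
      have h2 : 0 ≤ s * (1 - t) * (2 * t - 1) :=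
        mul_nonneg (mul_nonneg hs.le (by linarith)) (by linarith)
      have h3 : 0 ≤ s * (1 - s) * t ^ 2 :=
        mul_nonneg (mul_nonneg hs.le (by linarith)) (by positivity)
      nlinarith
  · refine (mul_le_mul_of_nonneg_left (min_le_right _ _) (by linarith)).trans ?_
    have hpos : 0 ≤ D ^ 2 * (1 - w) := mul_nonneg (by positivity) (by linarith)
    have h1 : 0 ≤ (D ^ 2 * (1 - w)) * ((1 + s) * (1 + t) - (1 + w) * (1 + s * t)) :=
      mul_nonneg hpos (by linarith)
    have h2 : (D ^ 2 * (1 - w)) * (1 + w) = (1 - s ^ 2) * (1 - t ^ 2) := by rw [← hw2]; ring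
    have h3 : (1 - s ^ 2) * (1 - t ^ 2) ≤ D ^ 2 * (1 - w) * ((1 + s) * (1 + t)) := by
      have : 0 ≤ (1 - s ^ 2) * (1 - t ^ 2) * (s * t) := by positivity
      have h4 : (D ^ 2 * (1 - w)) * ((1 + w) * (1 + s * t)) =
        (1 - s ^ 2) * (1 - t ^ 2) * (1 + s * t) := by rw [← h2]; ring
      linarith
    have hk : 0 < (1 + s) * (1 + t) := by positivity
    refine le_of_mul_le_mul_right ?_ hk
    linarith

theorem punctured_ball_lipschitz (n : ℕ) (hn : 2 ≤ n)
    (a : EuclideanSpace ℝ (Fin n)) (haB : ‖a‖ < 1) (ha0 : a ≠ 0)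
    (c : ℝ) (hc : 0 < c)
    (x y : EuclideanSpace ℝ (Fin n))
    (hx : ‖x‖ < 1) (hx0 : x ≠ 0) (hy : ‖y‖ < 1) (hy0 : y ≠ 0) :
    hP c a (sigmaInv a x) (sigmaInv a y) ≤ (1 + ‖a‖) * hP c 0 x y := by
  obtain ⟨hX, hp, hxl⟩ := sig_point a haB ha0 x hx hx0
  obtain ⟨hY, hq, hyl⟩ := sig_point a haB ha0 y hy hy0
  have hd := sig_dist a haB ha0 x y (sub_ne_zero.1 (norm_pos_iff.1 hX))
    (sub_ne_zero.1 (norm_pos_iff.1 hY))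
  have hm : 0 < min ‖x - 0‖ (1 - ‖x‖) := lt_min (by simpa using hx0) (by linarith)
  have hk : 0 < min ‖y - 0‖ (1 - ‖y‖) := lt_min (by simpa using hy0) (by linarith)
  have hs : 0 < ‖a‖ := norm_pos_iff.2 ha0
  have hr : 0 < (‖a‖ ^ 2)⁻¹ - 1 := by
    have : 1 < (‖a‖ ^ 2)⁻¹ := (one_lt_inv₀ (by positivity)).2 (by nlinarith)
    linarith
  unfold hP
  rw [hd]
  have hN := norm_nonneg (x - y)
  generalize ‖x - y‖ = N at *
  generalize min ‖x - 0‖ (1 - ‖x‖) = m at *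
  generalize min ‖y - 0‖ (1 - ‖y‖) = k at *
  generalize min ‖sigmaInv a x - a‖ (1 - ‖sigmaInv a x‖) = p at *
  generalize min ‖sigmaInv a y - a‖ (1 - ‖sigmaInv a y‖) = q at *
  generalize ‖x - (‖a‖ ^ 2)⁻¹ • a‖ = X at *
  generalize ‖y - (‖a‖ ^ 2)⁻¹ • a‖ = Y at *
  generalize (‖a‖ ^ 2)⁻¹ - 1 = R at *
  generalize ‖a‖ = s at *
  have hroot : R * √(m * k) ≤ (1 + s) * (X * Y * √(p * q)) := by
    apply le_of_sq_le_sq_aux ?_ (by positivity)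
    rw [mul_pow, mul_pow, mul_pow, Real.sq_sqrt (by positivity), Real.sq_sqrt (by positivity)]
    have := mul_le_mul hxl hyl (by positivity) (by positivity)
    linarith
  have hpq : 0 < √(p * q) := Real.sqrt_pos.2 (by positivity)
  have hmk : 0 < √(m * k) := Real.sqrt_pos.2 (by positivity)
  have hAB : c * (R / (X * Y) * N) / √(p * q) ≤ (1 + s) * (c * N / √(m * k)) := by
    have e : c * (R / (X * Y) * N) / √(p * q) = c * N * (R / (X * Y * √(p * q))) := by field_simp
    have e2 : (1 + s) * (c * N / √(m * k)) = c * N * ((1 + s) / √(m * k)) := by ring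
    rw [e, e2]
    apply mul_le_mul_of_nonneg_left _ (by positivity)
    rw [div_le_div_iff₀ (by positivity) hmk]
    exact hroot
  have hB : 0 ≤ c * N / √(m * k) := by positivity
  have hA : 0 ≤ c * (R / (X * Y) * N) / √(p * q) := by positivity
  generalize c * N / √(m * k) = B at *
  rw [← Real.log_rpow (by linarith)]
  apply Real.log_le_log (by linarith)
  have := one_add_mul_self_le_rpow_one_add (by linarith : -1 ≤ B) (by linarith : 1 ≤ 1 + s)
  linarith
end
end

section
/- Let n ≥ 2, a ∈ 𝔹ⁿ \ {0}, and let σ_a be the inversion in the sphere S^{n−1}(a*, r). Then for all x, y ∈ 𝔹ⁿ: |σ_a(x) − σ_a(y)| / √((1 − |σ_a(x)|)(1 − |σ_a(y)|)) = (|x − y|/√((1 − |x|²)(1 − |y|²))) · √((1 + |x − a|/(|a|·|x − a*|))·(1 + |y − a|/(|a|·|y − a*|))). -/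
noncomputable section

open Real Filter

theorem aux_norm {n : ℕ} (a x : EuclideanSpace ℝ (Fin n)) (ha0 : a ≠ 0)
    (hp : 0 < ‖x - (‖a‖ ^ 2)⁻¹ • a‖) :
    ‖sigmaInv a x‖ = ‖x - a‖ / (‖a‖ * ‖x - (‖a‖ ^ 2)⁻¹ • a‖) := by
  have ha : 0 < ‖a‖ := norm_pos_iff.mpr ha0
  rw [← sq_eq_sq₀ (norm_nonneg _) (by positivity), div_pow, mul_pow, sigmaInv]
  have ht : ‖x - (‖a‖ ^ 2)⁻¹ • a‖ ^ 2 = ‖x‖ ^ 2 - 2 * (‖a‖ ^ 2)⁻¹ * inner ℝ x a + (‖a‖ ^ 2)⁻¹ := by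
    rw [norm_sub_sq_real, inner_smul_right, norm_smul, norm_inv, norm_pow, norm_norm]
    field_simp
  have hxa := norm_sub_sq_real x a
  have hi : inner ℝ ((‖a‖ ^ 2)⁻¹ • a) (x - (‖a‖ ^ 2)⁻¹ • a)
      = (‖a‖ ^ 2)⁻¹ * inner ℝ x a - (‖a‖ ^ 2)⁻¹ := by
    rw [inner_sub_right, inner_smul_left, inner_smul_left, inner_smul_right,
      real_inner_self_eq_norm_sq, real_inner_comm]
    simp
    field_simp
  have hs : ‖(‖a‖ ^ 2)⁻¹ • a‖ ^ 2 = (‖a‖ ^ 2)⁻¹ := by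
    rw [norm_smul, norm_inv, norm_pow, norm_norm]
    field_simp
  rw [norm_add_sq_real, inner_smul_right, hi, hs, norm_smul, mul_pow, hxa, Real.norm_eq_abs, sq_abs]
  generalize ‖x - (‖a‖ ^ 2)⁻¹ • a‖ = P at *
  generalize inner ℝ x a = I at *
  have hN : ‖x‖ ^ 2 = P ^ 2 + 2 * (‖a‖ ^ 2)⁻¹ * I - (‖a‖ ^ 2)⁻¹ := by linarith
  rw [hN]
  field_simp
  ring

theorem aux_pos_s14 {n : ℕ} (a x : EuclideanSpace ℝ (Fin n)) (haB : ‖a‖ < 1) (ha0 : a ≠ 0)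
    (hx : ‖x‖ < 1) : 0 < ‖x - (‖a‖ ^ 2)⁻¹ • a‖ := by
  have ha : 0 < ‖a‖ := norm_pos_iff.mpr ha0
  rw [norm_pos_iff]
  intro h
  rw [sub_eq_zero] at h
  rw [h, norm_smul, norm_inv, norm_pow, norm_norm] at hx
  field_simp at hx
  linarith

theorem aux_one {n : ℕ} (a x : EuclideanSpace ℝ (Fin n)) (ha0 : a ≠ 0)
    (hp : 0 < ‖x - (‖a‖ ^ 2)⁻¹ • a‖) :
    1 - (‖x - a‖ / (‖a‖ * ‖x - (‖a‖ ^ 2)⁻¹ • a‖)) =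
      ((‖a‖ ^ 2)⁻¹ - 1) * (1 - ‖x‖ ^ 2) / ‖x - (‖a‖ ^ 2)⁻¹ • a‖ ^ 2 /
       (1 + ‖x - a‖ / (‖a‖ * ‖x - (‖a‖ ^ 2)⁻¹ • a‖)) := by
  have ha : 0 < ‖a‖ := norm_pos_iff.mpr ha0
  have ht : ‖x - (‖a‖ ^ 2)⁻¹ • a‖ ^ 2 = ‖x‖ ^ 2 - 2 * (‖a‖ ^ 2)⁻¹ * inner ℝ x a + (‖a‖ ^ 2)⁻¹ := by
    rw [norm_sub_sq_real, inner_smul_right, norm_smul, norm_inv, norm_pow, norm_norm]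
    field_simp
  have hxa := norm_sub_sq_real x a
  have hu : 0 < 1 + ‖x - a‖ / (‖a‖ * ‖x - (‖a‖ ^ 2)⁻¹ • a‖) := by positivity
  rw [eq_div_iff hu.ne']
  have e : ∀ u : ℝ, (1 - u) * (1 + u) = 1 - u ^ 2 := fun u => by ring
  rw [e, div_pow, mul_pow, hxa]
  generalize ‖x - (‖a‖ ^ 2)⁻¹ • a‖ = P at *
  generalize inner ℝ x a = I at *
  have hN : ‖x‖ ^ 2 = P ^ 2 + 2 * (‖a‖ ^ 2)⁻¹ * I - (‖a‖ ^ 2)⁻¹ := by linarith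
  rw [hN]
  field_simp
  ring

theorem aux_sub {n : ℕ} (a x y : EuclideanSpace ℝ (Fin n)) (haB : ‖a‖ < 1) (ha0 : a ≠ 0)
    (hp : 0 < ‖x - (‖a‖ ^ 2)⁻¹ • a‖) (hq : 0 < ‖y - (‖a‖ ^ 2)⁻¹ • a‖) :
    ‖sigmaInv a x - sigmaInv a y‖ = ((‖a‖ ^ 2)⁻¹ - 1) * ‖x - y‖ /
      (‖x - (‖a‖ ^ 2)⁻¹ • a‖ * ‖y - (‖a‖ ^ 2)⁻¹ • a‖) := by
  have ha : 0 < ‖a‖ := norm_pos_iff.mpr ha0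
  have hk : 0 ≤ (‖a‖ ^ 2)⁻¹ - 1 := by
    have := (one_le_inv₀ (by positivity : 0 < ‖a‖ ^ 2)).2 (by nlinarith)
    linarith
  have hxy : ‖x - y‖ = ‖(x - (‖a‖ ^ 2)⁻¹ • a) - (y - (‖a‖ ^ 2)⁻¹ • a)‖ := by
    congr 1; abel
  rw [hxy, sigmaInv, sigmaInv, add_sub_add_left_eq_sub]
  generalize x - (‖a‖ ^ 2)⁻¹ • a = p at *
  generalize y - (‖a‖ ^ 2)⁻¹ • a = q at *
  generalize (‖a‖ ^ 2)⁻¹ - 1 = k at *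
  rw [← sq_eq_sq₀ (norm_nonneg _) (by positivity), div_pow, mul_pow, mul_pow, norm_sub_sq_real,
    norm_sub_sq_real, inner_smul_left, inner_smul_right, norm_smul, norm_smul, mul_pow, mul_pow,
    Real.norm_eq_abs, Real.norm_eq_abs, sq_abs, sq_abs]
  simp only [conj_trivial]
  field_simp
  ring

theorem sigmaInv_ratio_identity (n : ℕ) (hn : 2 ≤ n)
    (a : EuclideanSpace ℝ (Fin n)) (haB : ‖a‖ < 1) (ha0 : a ≠ 0)
    (x y : EuclideanSpace ℝ (Fin n)) (hx : ‖x‖ < 1) (hy : ‖y‖ < 1) :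
    ‖sigmaInv a x - sigmaInv a y‖ /
        Real.sqrt ((1 - ‖sigmaInv a x‖) * (1 - ‖sigmaInv a y‖)) =
      ‖x - y‖ / Real.sqrt ((1 - ‖x‖ ^ 2) * (1 - ‖y‖ ^ 2)) *
        Real.sqrt ((1 + ‖x - a‖ / (‖a‖ * ‖x - (‖a‖ ^ 2)⁻¹ • a‖)) *
          (1 + ‖y - a‖ / (‖a‖ * ‖y - (‖a‖ ^ 2)⁻¹ • a‖))) := by
  have hp := aux_pos_s14 a x haB ha0 hx
  have hq := aux_pos_s14 a y haB ha0 hy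
  have ha : 0 < ‖a‖ := norm_pos_iff.mpr ha0
  have hk : 0 < (‖a‖ ^ 2)⁻¹ - 1 := by
    have := (one_lt_inv₀ (by positivity : 0 < ‖a‖ ^ 2)).2 (by nlinarith)
    linarith
  rw [aux_sub a x y haB ha0 hp hq, aux_norm a x ha0 hp, aux_norm a y ha0 hq,
    aux_one a x ha0 hp, aux_one a y ha0 hq]
  have hu : 0 < 1 + ‖x - a‖ / (‖a‖ * ‖x - (‖a‖ ^ 2)⁻¹ • a‖) := by positivity
  have hv : 0 < 1 + ‖y - a‖ / (‖a‖ * ‖y - (‖a‖ ^ 2)⁻¹ • a‖) := by positivity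
  have hX : 0 < 1 - ‖x‖ ^ 2 := by nlinarith [norm_nonneg x]
  have hY : 0 < 1 - ‖y‖ ^ 2 := by nlinarith [norm_nonneg y]
  generalize 1 + ‖x - a‖ / (‖a‖ * ‖x - (‖a‖ ^ 2)⁻¹ • a‖) = u at *
  generalize 1 + ‖y - a‖ / (‖a‖ * ‖y - (‖a‖ ^ 2)⁻¹ • a‖) = v at *
  generalize ‖x - (‖a‖ ^ 2)⁻¹ • a‖ = P at *
  generalize ‖y - (‖a‖ ^ 2)⁻¹ • a‖ = Q at *
  generalize (‖a‖ ^ 2)⁻¹ - 1 = k at *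
  generalize 1 - ‖x‖ ^ 2 = X at *
  generalize 1 - ‖y‖ ^ 2 = Y at *
  have e : k * X / P ^ 2 / u * (k * Y / Q ^ 2 / v) = (k / (P * Q)) ^ 2 * ((X * Y) / (u * v)) := by
    field_simp
  rw [e, Real.sqrt_mul (by positivity), Real.sqrt_sq (by positivity),
    Real.sqrt_div (by positivity)]
  have h1 : 0 < √(X * Y) := Real.sqrt_pos.2 (by positivity)
  have h2 : 0 < √(u * v) := Real.sqrt_pos.2 (by positivity)
  field_simp
end
end
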